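/- Fix integers N ≥ 1 and L ≥ 1. Define h : [0,N] → ℝ by h(0) = min(L,N) and h(x) = ((N−x)/x) · (1 − (1 − x/N)^L) for x ∈ (0,N], and define its lower convex envelope B : [0,N] → ℝ by B(R) = inf{ θ·h(x₁) + (1−θ)·h(x₂) : θ ∈ [0,1], x₁, x₂ ∈ [0,N], θ·x₁ + (1−θ)·x₂ = R }. Then for every R ∈ [0,N), B(R) ≤ 4.7 · max_{1 ≤ ℓ ≤ min(L,⌈N/4⌉)} (1−(1−1/N)^ℓ) · max(N − ℓR, 0). -/

import Mathlib

theorem aux_pow (x : ℝ) (h0 : 0 ≤ x) (h1 : x ≤ 1) (l : ℕ) :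
    (1 - x) ^ l ≤ 1 - l * x + l * (l - 1) / 2 * x ^ 2 := by
  induction l with
  | zero => simp
  | succ k ih =>
    have hk : (0:ℝ) ≤ (k:ℝ) * (k - 1) := by
      rcases Nat.eq_zero_or_pos k with h | h
      · simp [h]
      · have : (1:ℝ) ≤ k := by exact_mod_cast h
        exact mul_nonneg (by linarith) (by linarith)
    have h3 := mul_nonneg hk (pow_nonneg h0 3)
    have h4 := mul_le_mul_of_nonneg_right ih (by linarith : 0 ≤ 1 - x)
    rw [pow_succ]
    push_cast
    nlinarith


set_option maxHeartbeats 1000000 in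
/-- Theorem 9 (multiplicative gap of 4.7 for the static request model of
Maddah-Ali and Niesen with uniform requests): the lower convex envelope `B`
of the decentralized MN achievable rate function `h` is at most `4.7` times
the converse lower bound `max_{1 ≤ ℓ ≤ min(L,⌈N/4⌉)} (1-(1-1/N)^ℓ)(N-ℓR)⁺`
for every cache rate `R ∈ [0,N)`.  (Note `⌈N/4⌉ = (N+3)/4` in ℕ.) -/
theorem stmt_6 (N L : ℕ) (hN : 1 ≤ N) (hL : 1 ≤ L)
    (h : ℝ → ℝ)
    (hh0 : h 0 = (min L N : ℕ))
    (hhx : ∀ x : ℝ, 0 < x → x ≤ (N : ℝ) →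
      h x = (((N : ℝ) - x) / x) * (1 - (1 - x / (N : ℝ)) ^ L))
    (B : ℝ → ℝ)
    (hB : ∀ R : ℝ, B R = sInf {y : ℝ | ∃ θ x₁ x₂ : ℝ,
      0 ≤ θ ∧ θ ≤ 1 ∧ 0 ≤ x₁ ∧ x₁ ≤ (N : ℝ) ∧ 0 ≤ x₂ ∧ x₂ ≤ (N : ℝ) ∧
      θ * x₁ + (1 - θ) * x₂ = R ∧ y = θ * h x₁ + (1 - θ) * h x₂})
    (R : ℝ) (hR0 : 0 ≤ R) (hRN : R < (N : ℝ)) :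
    B R ≤ 4.7 * (Finset.Icc 1 (min L ((N + 3) / 4))).sup'
        (Finset.nonempty_Icc.2 (le_min hL (by omega)))
        (fun ℓ : ℕ => (1 - (1 - 1 / (N : ℝ)) ^ ℓ) * max ((N : ℝ) - ℓ * R) 0) := by

  have hNr : (1:ℝ) ≤ N := by exact_mod_cast hN
  have hN0 : (0:ℝ) < N := by linarith
  have hLr : (1:ℝ) ≤ L := by exact_mod_cast hL
  set M := min L ((N + 3) / 4) with hM
  have hM1 : 1 ≤ M := le_min hL (by omega)
  have hML : M ≤ L := min_le_left _ _
  have hMN : 4 * M ≤ N + 3 := by omega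
  have hM1r : (1:ℝ) ≤ M := by exact_mod_cast hM1
  have hMNr : 4 * (M:ℝ) ≤ N + 3 := by exact_mod_cast hMN
  have hnn : ∀ x : ℝ, 0 ≤ x → x ≤ N → 0 ≤ h x := by
    intro x hx0 hxN
    rcases hx0.eq_or_lt with e | hp
    · rw [← e, hh0]; positivity
    · rw [hhx x hp hxN]
      have a : x / N ≤ 1 := by rw [div_le_one hN0]; exact hxN
      have b : 0 ≤ x / N := by positivity
      have c : (1 - x / N) ^ L ≤ 1 := pow_le_one₀ (by linarith) (by linarith)
      exact mul_nonneg (div_nonneg (by linarith) hp.le) (by linarith)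
  have hBle : ∀ θ x₁ x₂ : ℝ, 0 ≤ θ → θ ≤ 1 → 0 ≤ x₁ → x₁ ≤ (N : ℝ) → 0 ≤ x₂ → x₂ ≤ (N : ℝ) →
      θ * x₁ + (1 - θ) * x₂ = R → B R ≤ θ * h x₁ + (1 - θ) * h x₂ := by
    intro θ x₁ x₂ a b c d e f g
    rw [hB]
    apply csInf_le
    · refine ⟨0, ?_⟩
      rintro y ⟨t, y1, y2, a, b, c, d, e, f, _, rfl⟩
      exact add_nonneg (mul_nonneg a (hnn _ c d)) (mul_nonneg (by linarith) (hnn _ e f))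
    · exact ⟨θ, x₁, x₂, a, b, c, d, e, f, g, rfl⟩
  have hBh : B R ≤ h R := by
    have := hBle 1 R R zero_le_one le_rfl hR0 hRN.le hR0 hRN.le (by ring)
    linarith
  have hup1 : ∀ x : ℝ, 0 < x → x ≤ N → h x ≤ N / x - 1 := by
    intro x hp hxN
    rw [hhx x hp hxN]
    have a : x / N ≤ 1 := by rw [div_le_one hN0]; exact hxN
    have c : 0 ≤ (1 - x / N) ^ L := pow_nonneg (by linarith) _
    have e : (N - x) / x = N / x - 1 := by field_simp
    have e2 : 0 ≤ (N - x) / x := div_nonneg (by linarith) hp.le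
    rw [← e]
    nlinarith
  have hup2 : h R ≤ L * (1 - R / N) := by
    rcases hR0.eq_or_lt with e | hp
    · rw [← e, hh0]
      have : ((min L N : ℕ) : ℝ) ≤ L := by exact_mod_cast min_le_left _ _
      simpa using this
    · rw [hhx R hp hRN.le]
      have a : R / N ≤ 1 := by rw [div_le_one hN0]; exact hRN.le
      have c := one_add_mul_le_pow (a := -(R / N)) (by linarith) L
      rw [← sub_eq_add_neg] at c
      have e2 : 0 ≤ (N - R) / R := div_nonneg (by linarith) hp.le
      calc (N - R) / R * (1 - (1 - R / N) ^ L) ≤ (N - R) / R * (L * (R / N)) :=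
            mul_le_mul_of_nonneg_left (by linarith) e2
        _ = _ := by field_simp
  set S := (Finset.Icc 1 M).sup'
        (Finset.nonempty_Icc.2 (le_min hL (by omega)))
        (fun ℓ : ℕ => (1 - (1 - 1 / (N : ℝ)) ^ ℓ) * max ((N : ℝ) - ℓ * R) 0) with hS
  have hSle : ∀ l : ℕ, 1 ≤ l → l ≤ M → 7 / 8 * (l * (1 - l * (R / N))) ≤ S := by
    intro l h1 h2
    have k1 : (1 - (1 - 1 / (N : ℝ)) ^ l) * max ((N : ℝ) - l * R) 0 ≤ S :=
      Finset.le_sup' (fun ℓ : ℕ => (1 - (1 - 1 / (N : ℝ)) ^ ℓ) * max ((N : ℝ) - ℓ * R) 0)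
        (Finset.mem_Icc.2 ⟨h1, h2⟩)
    have hl1 : (1:ℝ) ≤ l := by exact_mod_cast h1
    have hl2 : (l:ℝ) ≤ M := by exact_mod_cast h2
    have k2 := aux_pow (1 / N) (by positivity) (by rw [div_le_one hN0]; exact hNr) l
    have k3 : 7 / 8 * (l / N) ≤ 1 - (1 - 1 / (N : ℝ)) ^ l := by
      have : (l:ℝ) * (l - 1) / 2 * (1 / N) ^ 2 ≤ 1 / 8 * (l / N) := by
        have e : (l:ℝ) * (l - 1) / 2 * (1 / N) ^ 2 = (l / N) * ((l - 1) / (2 * N)) := by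
          field_simp
        have e2 : ((l:ℝ) - 1) / (2 * N) ≤ 1 / 8 := by
          rw [div_le_iff₀ (by positivity)]; linarith
        rw [e, mul_comm (1 / 8 : ℝ)]
        exact mul_le_mul_of_nonneg_left e2 (by positivity)
      have e3 : (l:ℝ) * (1 / N) = l / N := by ring
      linarith
    have k4 : 7 / 8 * (l * (1 - l * (R / N))) = 7 / 8 * ((l:ℝ) / N) * (N - l * R) := by
      field_simp
    rw [k4]
    refine le_trans ?_ k1
    refine le_trans (mul_le_mul_of_nonneg_left (le_max_left _ 0) (by positivity)) ?_
    exact mul_le_mul_of_nonneg_right k3 (le_max_right _ _)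
  set r := R / N with hr
  have hr0 : 0 ≤ r := by positivity
  have hr1 : r < 1 := by rw [hr, div_lt_one hN0]; exact hRN
  by_cases hc : r * (2 * M + 1) ≤ 1
  · have hSM := hSle M hM1 le_rfl
    rcases hML.eq_or_lt with e | hlt
    · rw [← e] at hup2
      have : (M:ℝ) * (1 - r) ≤ M * (4.1 * (1 - M * r)) :=
        mul_le_mul_of_nonneg_left (by nlinarith) (by linarith)
      nlinarith
    · have hM4 : N ≤ 4 * M := by omega
      have hM4r : (N:ℝ) ≤ 4 * M := by exact_mod_cast hM4
      have hd : (0:ℝ) < 2 * M + 1 := by linarith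
      set x : ℝ := N / (2 * M + 1) with hx
      have hx0 : 0 < x := by positivity
      have hxN : x ≤ N := div_le_self hN0.le (by linarith)
      have h2 := hup1 x hx0 hxN
      have hNx : N / x - 1 = 2 * M := by rw [hx]; field_simp; ring
      rw [hNx] at h2
      have h00 : h 0 ≤ N := by rw [hh0]; exact_mod_cast min_le_right _ _
      have hb := hBle (1 - r * (2 * M + 1)) 0 x (by linarith) (by nlinarith) le_rfl hN0.le hx0.le hxN
        (by rw [hx, hr]; field_simp; ring)
      have a1 := mul_le_mul_of_nonneg_left h00 (by linarith : 0 ≤ 1 - r * (2 * M + 1))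
      have a2 := mul_le_mul_of_nonneg_left h2 (by nlinarith : 0 ≤ 1 - (1 - r * (2 * M + 1)))
      have a3 := mul_le_mul_of_nonneg_left hM4r (by linarith : 0 ≤ 1 - r * (2 * M + 1))
      have a4 : 0 ≤ M * (1 - M * r) := mul_nonneg (by linarith) (by nlinarith)
      nlinarith
  · push Not at hc
    have hrp : 0 < r := by
      rcases hr0.eq_or_lt with e | hp
      · rw [← e] at hc; linarith
      · exact hp
    have hRp : 0 < R := by
      rcases hR0.eq_or_lt with e | hp
      · rw [hr, ← e] at hrp; simp at hrp
      · exact hp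
    have h2 := hup1 R hRp hRN.le
    have hNR : N / R = 1 / r := by rw [hr]; field_simp
    rw [hNR] at h2
    have hy : 0 ≤ (1 / r + 1) / 2 := by positivity
    have f1 := Nat.floor_le hy
    have f2 := Nat.lt_floor_add_one ((1 / r + 1) / 2)
    have f3 : 1 ≤ ⌊(1 / r + 1) / 2⌋₊ := by
      rw [Nat.one_le_floor_iff]
      have : 1 ≤ 1 / r := by rw [le_div_iff₀ hrp]; linarith
      linarith
    have f4 : ⌊(1 / r + 1) / 2⌋₊ ≤ M := by
      have : ⌊(1 / r + 1) / 2⌋₊ < M + 1 := by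
        rw [Nat.floor_lt hy]
        have : 1 / r < 2 * M + 1 := by rw [div_lt_iff₀ hrp]; linarith
        push_cast; linarith
      omega
    set l := ⌊(1 / r + 1) / 2⌋₊
    have hs := hSle l f3 f4
    have hir : 1 / r * r = 1 := by field_simp
    have g1 : 2 * l * r ≤ 1 + r := by
      have := mul_le_mul_of_nonneg_right f1 hr0
      linarith
    have g2 : 1 - r ≤ 2 * l * r := by
      have := mul_le_mul_of_nonneg_right f2.le hr0
      linarith
    have g3 : (1 - 2 * l * r) ^ 2 ≤ r := by
      have q1 : (1 - 2 * l * r) ^ 2 ≤ r ^ 2 := sq_le_sq' (by linarith) (by linarith)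
      have q2 : r * r ≤ r * 1 := mul_le_mul_of_nonneg_left hr1.le hr0
      linarith [pow_two r]
    have g4 : 1 / r - 1 ≤ 4 * (l * (1 - l * r)) := by
      have : 1 / r ≤ 4 * (l * (1 - l * r)) + 1 := by
        rw [div_le_iff₀ hrp]; linarith
      linarith
    have g5 : 0 ≤ 1 / r - 1 := by
      have : 1 ≤ 1 / r := by rw [le_div_iff₀ hrp]; linarith
      linarith
    linarith
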